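/- Let a = (4/π)·𝒦(1/√2)². The function f(K) = log(λ(K))/(K−1) is strictly decreasing and convex on (1, ∞); moreover f(K) → a as K → 1⁺ and f(K) → π as K → ∞, so f maps (1, ∞) onto (π, a). -/

import Mathlib

open Set Filter

/-- Complete elliptic integral of the first kind. -/
noncomputable def ellK (r : ℝ) : ℝ :=
  ∫ θ in (0:ℝ)..(Real.pi / 2), (1 - r ^ 2 * Real.sin θ ^ 2) ^ (-(1/2) : ℝ)

/-- The Grötzsch modulus μ(r) = (π/2)·𝒦'(r)/𝒦(r). -/
noncomputable def mu (r : ℝ) : ℝ :=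
  Real.pi / 2 * ellK (Real.sqrt (1 - r ^ 2)) / ellK r

/-- The integral of `w θ * (1 - x sin² θ)^p` over `[0, π/2]`. -/
noncomputable def JJ (w : ℝ → ℝ) (p x : ℝ) : ℝ :=
  ∫ θ in (0:ℝ)..(Real.pi / 2), w θ * (1 - x * Real.sin θ ^ 2) ^ p

lemma base_pos {x : ℝ} (hx : x < 1) (θ : ℝ) : 0 < 1 - x * Real.sin θ ^ 2 := by
  have h1 := Real.sin_sq_le_one θ
  have h0 := sq_nonneg (Real.sin θ)
  rcases le_or_gt x 0 with h | h <;> nlinarith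

lemma JJ_cont (w : ℝ → ℝ) (hw : Continuous w) (p : ℝ) {x : ℝ} (hx : x < 1) :
    Continuous (fun θ => w θ * (1 - x * Real.sin θ ^ 2) ^ p) := by
  refine hw.mul (Continuous.rpow_const (by fun_prop) ?_)
  intro θ
  exact Or.inl (base_pos hx θ).ne'

lemma JJ_int (w : ℝ → ℝ) (hw : Continuous w) (p : ℝ) {x : ℝ} (hx : x < 1) :
    IntervalIntegrable (fun θ => w θ * (1 - x * Real.sin θ ^ 2) ^ p) MeasureTheory.volume
      0 (Real.pi / 2) := (JJ_cont w hw p hx).intervalIntegrable _ _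

lemma JJ_deriv (w : ℝ → ℝ) (hw : Continuous w) (p : ℝ) {x : ℝ} (hx : x < 1) :
    HasDerivAt (JJ w p) (JJ (fun θ => w θ * (-p * Real.sin θ ^ 2)) (p - 1) x) x := by
  have hw' : Continuous (fun θ => w θ * (-p * Real.sin θ ^ 2)) := by fun_prop
  set d := (1 - x) / 2 with hd
  have hd0 : 0 < d := by rw [hd]; linarith
  have hball : ∀ y ∈ Metric.closedBall x d, y < 1 := by
    intro y hy
    rw [Metric.mem_closedBall, Real.dist_eq, abs_le] at hy
    linarith [hy.2]
  obtain ⟨C, hC⟩ := ((isCompact_closedBall x d).prod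
    (isCompact_Icc (a := (0:ℝ)) (b := Real.pi / 2))).exists_bound_of_continuousOn
    (f := fun z : ℝ × ℝ => (w z.2 * (-p * Real.sin z.2 ^ 2)) * (1 - z.1 * Real.sin z.2 ^ 2) ^ (p - 1))
    (by
      refine ContinuousOn.mul (Continuous.continuousOn (by fun_prop)) ?_
      refine ContinuousOn.rpow_const (Continuous.continuousOn (by fun_prop)) ?_
      rintro ⟨y, θ⟩ ⟨hy, _⟩
      exact Or.inl (base_pos (hball y hy) θ).ne')
  have h2 : (0:ℝ) ≤ Real.pi / 2 := by positivity
  have := (intervalIntegral.hasDerivAt_integral_of_dominated_loc_of_deriv_le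
    (μ := MeasureTheory.volume) (a := 0) (b := Real.pi / 2)
    (F := fun y θ => w θ * (1 - y * Real.sin θ ^ 2) ^ p)
    (F' := fun y θ => (w θ * (-p * Real.sin θ ^ 2)) * (1 - y * Real.sin θ ^ 2) ^ (p - 1))
    (x₀ := x) (s := Metric.closedBall x d) (bound := fun _ => C)
    (Metric.closedBall_mem_nhds x hd0) ?_ (JJ_int w hw p hx) ?_ ?_ ?_ ?_).2
  · exact this
  · filter_upwards [Metric.closedBall_mem_nhds x hd0] with y hy
    exact (JJ_cont w hw p (hball y hy)).aestronglyMeasurable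
  · exact (JJ_cont _ hw' (p - 1) hx).aestronglyMeasurable
  · refine Eventually.of_forall fun θ hθ y hy => ?_
    rw [uIoc_of_le h2] at hθ
    exact hC (y, θ) ⟨hy, Ioc_subset_Icc_self hθ⟩
  · exact intervalIntegrable_const
  · refine Eventually.of_forall fun θ hθ y hy => ?_
    have hb := base_pos (hball y hy) θ
    have h1 : HasDerivAt (fun y : ℝ => 1 - y * Real.sin θ ^ 2) (-(Real.sin θ ^ 2)) y := by
      simpa using ((hasDerivAt_id y).mul_const (Real.sin θ ^ 2)).const_sub 1
    have h3 := (h1.rpow_const (p := p) (Or.inl hb.ne')).const_mul (w θ)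
    refine h3.congr_deriv ?_
    ring

lemma exact_zero {x : ℝ} (hx : x < 1) :
    ∫ θ in (0:ℝ)..(Real.pi / 2), ((Real.cos θ ^ 2 - Real.sin θ ^ 2) * (1 - x * Real.sin θ ^ 2) ^ (-(1/2) : ℝ)
      + (x * Real.sin θ ^ 2 * Real.cos θ ^ 2) * (1 - x * Real.sin θ ^ 2) ^ (-(3/2) : ℝ)) = 0 := by
  have := intervalIntegral.integral_eq_sub_of_hasDerivAt (a := 0) (b := Real.pi / 2)
    (f := fun θ => Real.sin θ * Real.cos θ * (1 - x * Real.sin θ ^ 2) ^ (-(1/2) : ℝ))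
    (f' := fun θ => ((Real.cos θ ^ 2 - Real.sin θ ^ 2) * (1 - x * Real.sin θ ^ 2) ^ (-(1/2) : ℝ)
      + (x * Real.sin θ ^ 2 * Real.cos θ ^ 2) * (1 - x * Real.sin θ ^ 2) ^ (-(3/2) : ℝ))) ?_ ?_
  · rw [this]; simp
  · intro θ _
    have hb := base_pos hx θ
    have h1 : HasDerivAt (fun θ : ℝ => 1 - x * Real.sin θ ^ 2)
        (-(x * (2 * Real.sin θ * Real.cos θ))) θ := by
      have := (((Real.hasDerivAt_sin θ).pow 2).const_mul x).const_sub 1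
      refine this.congr_deriv ?_
      simp
    have h2 := h1.rpow_const (p := (-(1/2) : ℝ)) (Or.inl hb.ne')
    have h3 := ((Real.hasDerivAt_sin θ).mul (Real.hasDerivAt_cos θ)).mul h2
    refine h3.congr_deriv ?_
    have e2 : (-(1/2) - 1 : ℝ) = -(3/2) := by norm_num
    simp only [e2, Pi.mul_apply]
    ring
  · refine IntervalIntegrable.add ?_ ?_
    · exact JJ_int (fun θ => Real.cos θ ^ 2 - Real.sin θ ^ 2) (by fun_prop) _ hx
    · exact JJ_int (fun θ => x * Real.sin θ ^ 2 * Real.cos θ ^ 2) (by fun_prop) _ hx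

/-- `k(x) = 𝒦(√x)`. -/
noncomputable def kk (x : ℝ) : ℝ := JJ (fun _ => 1) (-(1/2)) x
/-- cosine-weighted integral. -/
noncomputable def CC (x : ℝ) : ℝ := JJ (fun θ => Real.cos θ ^ 2) (-(1/2)) x
/-- derivative of `kk`. -/
noncomputable def kd (x : ℝ) : ℝ := JJ (fun θ => 1 * (-(-(1/2)) * Real.sin θ ^ 2)) (-(1/2) - 1) x
/-- The function x(1-x) times the derivative of kk. -/
noncomputable def DD (x : ℝ) : ℝ := x / 2 * CC x

lemma kk_deriv {x : ℝ} (hx : x < 1) : HasDerivAt kk (kd x) x :=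
  JJ_deriv _ (by fun_prop) _ hx

lemma kd_eq {x : ℝ} (hx : x < 1) : x * (1 - x) * kd x = DD x := by
  have key : CC x - 2 * (1 - x) * kd x = 0 := by
    rw [← exact_zero hx, CC, kd, JJ, JJ, ← intervalIntegral.integral_const_mul,
      ← intervalIntegral.integral_sub]
    · refine intervalIntegral.integral_congr fun θ _ => ?_
      have hb := base_pos hx θ
      have e1 : (1 - x * Real.sin θ ^ 2) ^ (-(1/2) : ℝ) =
          (1 - x * Real.sin θ ^ 2) * (1 - x * Real.sin θ ^ 2) ^ (-(3/2) : ℝ) := by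
        rw [← Real.rpow_one_add' hb.le (by norm_num)]; norm_num
      have e2 : (-(1/2) - 1 : ℝ) = -(3/2) := by norm_num
      simp only [e2, e1]
      rw [Real.cos_sq']
      ring
    · exact JJ_int _ (by fun_prop) _ hx
    · exact (JJ_int _ (by fun_prop) _ hx).const_mul _
  rw [DD]; linear_combination (-x/2) * key

lemma DD_deriv {x : ℝ} (hx : x < 1) : HasDerivAt DD (kk x / 4) x := by
  have h := ((hasDerivAt_id x).div_const 2).mul
    (JJ_deriv (fun θ => Real.cos θ ^ 2) (by fun_prop) (-(1/2)) hx)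
  refine h.congr_deriv ?_
  have key : 2 * CC x + 2 * x * JJ (fun θ => Real.cos θ ^ 2 * (-(-(1/2)) * Real.sin θ ^ 2)) (-(1/2) - 1) x
      - kk x = 0 := by
    rw [← exact_zero hx, CC, kk, JJ, JJ, JJ, ← intervalIntegral.integral_const_mul,
      ← intervalIntegral.integral_const_mul, ← intervalIntegral.integral_add,
      ← intervalIntegral.integral_sub]
    · refine intervalIntegral.integral_congr fun θ _ => ?_
      have e2 : (-(1/2) - 1 : ℝ) = -(3/2) := by norm_num
      simp only [e2]
      rw [Real.cos_sq']
      ring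
    · exact ((JJ_int _ (by fun_prop) _ hx).const_mul _).add ((JJ_int _ (by fun_prop) _ hx).const_mul _)
    · exact JJ_int _ (by fun_prop) _ hx
    · exact (JJ_int _ (by fun_prop) _ hx).const_mul _
    · exact (JJ_int _ (by fun_prop) _ hx).const_mul _
  rw [CC] at key
  simp only [id]
  linear_combination key / 4

lemma pi_half_pos : (0:ℝ) < Real.pi / 2 := by positivity

lemma kk_pos {x : ℝ} (hx : x < 1) : 0 < kk x := by
  rw [kk, JJ]
  refine intervalIntegral.intervalIntegral_pos_of_pos_on (JJ_int _ (by fun_prop) _ hx) ?_ pi_half_pos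
  intro θ _
  have := Real.rpow_pos_of_pos (base_pos hx θ) (-(1/2))
  linarith

lemma CC_pos {x : ℝ} (hx : x < 1) : 0 < CC x := by
  rw [CC, JJ]
  refine intervalIntegral.intervalIntegral_pos_of_pos_on (JJ_int _ (by fun_prop) _ hx) ?_ pi_half_pos
  intro θ hθ
  have h1 := Real.rpow_pos_of_pos (base_pos hx θ) (-(1/2))
  have h2 : 0 < Real.cos θ := Real.cos_pos_of_mem_Ioo ⟨by linarith [hθ.1, pi_half_pos], hθ.2⟩
  positivity

lemma DD_pos {x : ℝ} (h0 : 0 < x) (hx : x < 1) : 0 < DD x := by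
  have := CC_pos hx
  rw [DD]; positivity

lemma kk_zero : kk 0 = Real.pi / 2 := by
  simp [kk, JJ]

lemma kk_contAt {x : ℝ} (hx : x < 1) : ContinuousAt kk x := (kk_deriv hx).continuousAt

lemma kd_pos {x : ℝ} (h0 : 0 < x) (hx : x < 1) : 0 < kd x := by
  have h := kd_eq hx
  have h2 := DD_pos h0 hx
  rw [← h] at h2
  exact (mul_pos_iff_of_pos_left (by nlinarith)).1 h2

lemma kk_strictMono : StrictMonoOn kk (Ioo 0 1) := by
  refine strictMonoOn_of_deriv_pos (convex_Ioo 0 1)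
    (fun x hx => (kk_contAt hx.2).continuousWithinAt) ?_
  intro x hx
  rw [interior_Ioo] at hx
  rw [(kk_deriv hx.2).deriv]
  exact kd_pos hx.1 hx.2

lemma DD_mono : MonotoneOn DD (Ioo 0 1) := by
  refine monotoneOn_of_deriv_nonneg (convex_Ioo 0 1)
    (fun x hx => (DD_deriv hx.2).continuousAt.continuousWithinAt) ?_ ?_
  · intro x hx
    rw [interior_Ioo] at hx
    exact (DD_deriv hx.2).differentiableAt.differentiableWithinAt
  · intro x hx
    rw [interior_Ioo] at hx
    rw [(DD_deriv hx.2).deriv]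
    have := kk_pos hx.2
    positivity

lemma base_lim : Tendsto CC (nhdsWithin 1 (Iio 1)) (nhds 1) := by
  have hI : ∫ θ in (0:ℝ)..(Real.pi / 2), Real.cos θ = 1 := by simp
  have key : Tendsto CC (nhdsWithin 1 (Iio 1)) (nhds (∫ θ in (0:ℝ)..(Real.pi / 2), Real.cos θ)) := by
    refine intervalIntegral.tendsto_integral_filter_of_dominated_convergence (fun _ => 1) ?_ ?_
      intervalIntegrable_const ?_
    · filter_upwards [self_mem_nhdsWithin] with x hx
      exact (JJ_cont (fun θ => Real.cos θ ^ 2) (by fun_prop) _ hx).aestronglyMeasurable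
    · filter_upwards [self_mem_nhdsWithin] with x hx
      refine Eventually.of_forall fun θ hθ => ?_
      have hb := base_pos hx θ
      rw [uIoc_of_le pi_half_pos.le] at hθ
      have hc : 0 ≤ Real.cos θ := Real.cos_nonneg_of_mem_Icc ⟨by linarith [hθ.1, pi_half_pos], hθ.2⟩
      have hp := Real.rpow_pos_of_pos hb (-(1/2))
      rw [Real.norm_of_nonneg (by positivity)]
      rcases hc.eq_or_lt with h | h
      · rw [← h]; simp
      · have h1 : (1 - x * Real.sin θ ^ 2) ^ (-(1/2) : ℝ) ≤ (Real.cos θ ^ 2) ^ (-(1/2) : ℝ) := by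
          refine Real.rpow_le_rpow_of_nonpos (by positivity) ?_ (by norm_num)
          rw [Real.cos_sq']
          have hx' : x < 1 := hx
          nlinarith [sq_nonneg (Real.sin θ)]
        have h2 : (Real.cos θ ^ 2) ^ (-(1/2) : ℝ) = (Real.cos θ)⁻¹ := by
          rw [Real.rpow_neg (by positivity), ← Real.sqrt_eq_rpow, Real.sqrt_sq hc]
        rw [h2] at h1
        calc Real.cos θ ^ 2 * (1 - x * Real.sin θ ^ 2) ^ (-(1/2) : ℝ)
            ≤ Real.cos θ ^ 2 * (Real.cos θ)⁻¹ := by gcongr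
          _ = Real.cos θ := by field_simp
          _ ≤ 1 := Real.cos_le_one θ
    · refine Eventually.of_forall fun θ hθ => ?_
      rw [uIoc_of_le pi_half_pos.le] at hθ
      have hc : 0 ≤ Real.cos θ := Real.cos_nonneg_of_mem_Icc ⟨by linarith [hθ.1, pi_half_pos], hθ.2⟩
      rcases hc.eq_or_lt with h | h
      · simp [← h]
      · have h2 : Real.cos θ ^ 2 * (1 - 1 * Real.sin θ ^ 2) ^ (-(1/2) : ℝ) = Real.cos θ := by
          rw [one_mul, ← Real.cos_sq', Real.rpow_neg (by positivity), ← Real.sqrt_eq_rpow,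
            Real.sqrt_sq hc]
          field_simp
        have : ContinuousAt (fun x : ℝ => Real.cos θ ^ 2 * (1 - x * Real.sin θ ^ 2) ^ (-(1/2) : ℝ)) 1 := by
          refine ContinuousAt.mul continuousAt_const (ContinuousAt.rpow_const (by fun_prop) (Or.inl ?_))
          rw [one_mul, ← Real.cos_sq']
          positivity
        have h3 := this.tendsto
        simp only [h2] at h3
        exact h3.mono_left nhdsWithin_le_nhds
  rwa [hI] at key

lemma kk_le {x : ℝ} (h0 : 0 < x) (h1 : x < 1) : x * kk (1 - x) ≤ Real.pi / 2 * Real.sqrt x := by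
  have hx : 1 - x < 1 := by linarith
  have : kk (1 - x) ≤ ∫ θ in (0:ℝ)..(Real.pi / 2), x ^ (-(1/2) : ℝ) := by
    rw [kk, JJ]
    refine intervalIntegral.integral_mono_on pi_half_pos.le (JJ_int _ (by fun_prop) _ hx)
      intervalIntegrable_const ?_
    intro θ _
    rw [one_mul]
    refine Real.rpow_le_rpow_of_nonpos h0 ?_ (by norm_num)
    nlinarith [Real.sin_sq_le_one θ, sq_nonneg (Real.sin θ)]
  rw [intervalIntegral.integral_const, smul_eq_mul, sub_zero] at this
  have e : x * x ^ (-(1/2) : ℝ) = Real.sqrt x := by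
    rw [Real.sqrt_eq_rpow, ← Real.rpow_one_add' h0.le (by norm_num)]; norm_num
  calc x * kk (1 - x) ≤ x * (Real.pi / 2 * x ^ (-(1/2) : ℝ)) := by gcongr
    _ = Real.pi / 2 * Real.sqrt x := by rw [← e]; ring

/-- Legendre relation in Wronskian form. -/
lemma legendre {x : ℝ} (h0 : 0 < x) (h1 : x < 1) :
    DD x * kk (1 - x) + DD (1 - x) * kk x = Real.pi / 4 := by
  set W : ℝ → ℝ := fun x => DD x * kk (1 - x) + DD (1 - x) * kk x with hW
  have hd : ∀ y ∈ Ioo (0:ℝ) 1, HasDerivAt W 0 y := by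
    intro y hy
    have hy' : 1 - y < 1 := by linarith [hy.1]
    have e : HasDerivAt (fun y : ℝ => 1 - y) (-1) y := by
      simpa using (hasDerivAt_id y).const_sub 1
    have a1 : HasDerivAt (fun y => kk (1 - y)) (kd (1 - y) * -1) y := (kk_deriv hy').comp y e
    have a2 : HasDerivAt (fun y => DD (1 - y)) (kk (1 - y) / 4 * -1) y := (DD_deriv hy').comp y e
    refine (((DD_deriv hy.2).mul a1).add (a2.mul (kk_deriv hy.2))).congr_deriv ?_
    rw [← kd_eq hy.2, ← kd_eq hy']
    ring
  have hconst : ∀ y ∈ Ioo (0:ℝ) 1, W y = W x := fun y hy =>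
    isOpen_Ioo.is_const_of_deriv_eq_zero isPreconnected_Ioo
      (fun z hz => (hd z hz).differentiableAt.differentiableWithinAt)
      (fun z hz => (hd z hz).deriv) hy ⟨h0, h1⟩
  have hIoo : Ioo (0:ℝ) 1 ∈ nhdsWithin (0:ℝ) (Ioi 0) := Ioo_mem_nhdsGT one_pos
  have t1 : Tendsto W (nhdsWithin 0 (Ioi 0)) (nhds (W x)) := by
    refine tendsto_const_nhds.congr' ?_
    filter_upwards [hIoo] with y hy
    exact (hconst y hy).symm
  have t2 : Tendsto W (nhdsWithin 0 (Ioi 0)) (nhds (0 + (1 - 0) / 2 * 1 * (Real.pi / 2))) := by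
    have tid : Tendsto (fun y : ℝ => y) (nhdsWithin 0 (Ioi 0)) (nhds 0) :=
      tendsto_id.mono_left nhdsWithin_le_nhds
    refine Tendsto.add ?_ ?_
    · have c1 : Tendsto (fun y => CC y / 2) (nhdsWithin 0 (Ioi 0)) (nhds (CC 0 / 2)) := by
        have : ContinuousAt CC 0 :=
          (JJ_deriv (fun θ => Real.cos θ ^ 2) (by fun_prop) (-(1/2)) one_pos).continuousAt
        exact (this.tendsto.mono_left nhdsWithin_le_nhds).div_const 2
      have c2 : Tendsto (fun y => y * kk (1 - y)) (nhdsWithin 0 (Ioi 0)) (nhds 0) := by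
        have c3 : Tendsto (fun y => Real.pi / 2 * Real.sqrt y) (nhdsWithin 0 (Ioi 0)) (nhds 0) := by
          have : Tendsto (fun y => Real.pi / 2 * Real.sqrt y) (nhds 0)
              (nhds (Real.pi / 2 * Real.sqrt 0)) :=
            Continuous.tendsto (by fun_prop) 0
          simp only [Real.sqrt_zero, mul_zero] at this
          exact this.mono_left nhdsWithin_le_nhds
        refine tendsto_of_tendsto_of_tendsto_of_le_of_le' tendsto_const_nhds c3 ?_ ?_
        · filter_upwards [hIoo] with y hy
          exact mul_nonneg hy.1.le (kk_pos (by linarith [hy.1])).le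
        · filter_upwards [hIoo] with y hy
          exact kk_le hy.1 hy.2
      have := c1.mul c2
      rw [mul_zero] at this
      refine this.congr fun y => ?_
      rw [DD]; ring
    · have tk : Tendsto kk (nhdsWithin 0 (Ioi 0)) (nhds (Real.pi / 2)) := by
        rw [← kk_zero]
        exact (kk_contAt one_pos).tendsto.mono_left nhdsWithin_le_nhds
      have tc : Tendsto (fun y : ℝ => CC (1 - y)) (nhdsWithin 0 (Ioi 0)) (nhds 1) := by
        refine base_lim.comp (tendsto_nhdsWithin_iff.2 ⟨?_, ?_⟩)
        · simpa using tid.const_sub 1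
        · filter_upwards [hIoo] with y hy
          simpa using hy.1
      exact ((((tid.const_sub 1).div_const 2)).mul tc).mul tk
  have := tendsto_nhds_unique t1 t2
  change W x = _
  rw [this]; ring

/-- `K` as a function of `t = log (r²/(1-r²))`. -/
noncomputable def Ph (t : ℝ) : ℝ := kk (Real.sigmoid t) / kk (Real.sigmoid (-t))
/-- reciprocal of the derivative of `Ph`. -/
noncomputable def hh (t : ℝ) : ℝ := 4 / Real.pi * kk (Real.sigmoid (-t)) ^ 2
/-- derivative of `hh`. -/
noncomputable def hd (t : ℝ) : ℝ := -(8 / Real.pi * kk (Real.sigmoid (-t)) * DD (Real.sigmoid (-t)))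

lemma ks_pos (t : ℝ) : 0 < kk (Real.sigmoid t) := kk_pos (Real.sigmoid_lt_one t)

lemma ks_deriv (t : ℝ) :
    HasDerivAt (fun t => kk (Real.sigmoid t)) (DD (Real.sigmoid t)) t := by
  have h : HasDerivAt (fun t => kk (Real.sigmoid t)) _ t :=
    (kk_deriv (Real.sigmoid_lt_one t)).comp t (Real.hasDerivAt_sigmoid t)
  refine h.congr_deriv ?_
  rw [← kd_eq (Real.sigmoid_lt_one t)]; ring

lemma ks_neg_deriv (t : ℝ) :
    HasDerivAt (fun t => kk (Real.sigmoid (-t))) (-DD (Real.sigmoid (-t))) t := by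
  have h : HasDerivAt (fun t => kk (Real.sigmoid (-t))) _ t :=
    (ks_deriv (-t)).comp t (hasDerivAt_neg t)
  refine h.congr_deriv ?_
  ring

lemma hh_pos (t : ℝ) : 0 < hh t := by
  have := ks_pos (-t)
  have := Real.pi_pos
  rw [hh]; positivity

lemma Ph_pos (t : ℝ) : 0 < Ph t := div_pos (ks_pos t) (ks_pos (-t))

lemma Ph_deriv (t : ℝ) : HasDerivAt Ph (hh t)⁻¹ t := by
  refine ((ks_deriv t).div (ks_neg_deriv t) (ks_pos (-t)).ne').congr_deriv ?_
  have h := legendre (Real.sigmoid_pos t) (Real.sigmoid_lt_one t)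
  rw [← Real.sigmoid_neg] at h
  have h1 := (ks_pos (-t)).ne'
  have h2 := Real.pi_pos.ne'
  rw [hh]
  field_simp
  linear_combination 4 * h

lemma hh_deriv (t : ℝ) : HasDerivAt hh (hd t) t := by
  refine (((ks_neg_deriv t).pow 2).const_mul (4 / Real.pi)).congr_deriv ?_
  rw [hd]; simp; ring

lemma sig_mem (t : ℝ) : Real.sigmoid t ∈ Ioo (0:ℝ) 1 := ⟨Real.sigmoid_pos t, Real.sigmoid_lt_one t⟩

lemma hh_anti : StrictAnti hh := by
  intro s t hst
  have := kk_strictMono (sig_mem (-t)) (sig_mem (-s)) (Real.sigmoid_lt (neg_lt_neg hst))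
  have h0 := ks_pos (-t)
  have := Real.pi_pos
  simp only [hh]
  gcongr

lemma hhd_mono : Monotone (fun t => hd t * hh t) := by
  intro s t hst
  have a1 := kk_strictMono.monotoneOn (sig_mem (-t)) (sig_mem (-s)) (Real.sigmoid_le (neg_le_neg hst))
  have a2 := DD_mono (sig_mem (-t)) (sig_mem (-s)) (Real.sigmoid_le (neg_le_neg hst))
  have h0 := ks_pos (-t)
  have h1 := DD_pos (sig_mem (-t)).1 (sig_mem (-t)).2
  have h0' := ks_pos (-s)
  have h1' := DD_pos (sig_mem (-s)).1 (sig_mem (-s)).2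
  have := Real.pi_pos
  simp only [hh, hd, neg_mul]
  refine neg_le_neg ?_
  gcongr

lemma hh_lim : Tendsto hh atTop (nhds Real.pi) := by
  have h1 : Tendsto (fun t : ℝ => Real.sigmoid (-t)) atTop (nhds 0) :=
    Real.tendsto_sigmoid_atBot.comp tendsto_neg_atTop_atBot
  have h2 : Tendsto (fun t : ℝ => kk (Real.sigmoid (-t))) atTop (nhds (kk 0)) :=
    (kk_contAt one_pos).tendsto.comp h1
  have h3 := (h2.pow 2).const_mul (4 / Real.pi)
  have e : 4 / Real.pi * kk 0 ^ 2 = Real.pi := by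
    rw [kk_zero]
    have := Real.pi_pos.ne'
    field_simp; norm_num
  rw [e] at h3
  exact h3

lemma Ph_zero : Ph 0 = 1 := by
  rw [Ph, neg_zero, div_self (ks_pos 0).ne']

lemma Ph_neg (t : ℝ) : Ph (-t) = (Ph t)⁻¹ := by
  rw [Ph, Ph, neg_neg, inv_div]

lemma Ph_lower {t : ℝ} (ht : 0 ≤ t) : 1 + t * (hh 0)⁻¹ ≤ Ph t := by
  have hm : MonotoneOn (fun t => Ph t - t * (hh 0)⁻¹) (Ici 0) := by
    have hder : ∀ t, HasDerivAt (fun t => Ph t - t * (hh 0)⁻¹) ((hh t)⁻¹ - 1 * (hh 0)⁻¹) t :=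
      fun t => (Ph_deriv t).sub ((hasDerivAt_id t).mul_const _)
    refine monotoneOn_of_deriv_nonneg (convex_Ici 0)
      (fun x _ => (hder x).continuousAt.continuousWithinAt)
      (fun x _ => (hder x).differentiableAt.differentiableWithinAt) ?_
    intro x hx
    rw [interior_Ici] at hx
    rw [(hder x).deriv, one_mul, sub_nonneg]
    exact inv_anti₀ (hh_pos x) (hh_anti hx).le
  have := hm (self_mem_Ici) ht ht
  simp only [Ph_zero] at this
  linarith

/-- logarithm of `Ph`. -/
noncomputable def LL (t : ℝ) : ℝ := Real.log (Ph t)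

lemma LL_deriv (t : ℝ) : HasDerivAt LL ((hh t)⁻¹ / Ph t) t := (Ph_deriv t).log (Ph_pos t).ne'

lemma LL_strictMono : StrictMono LL := by
  refine strictMono_of_deriv_pos fun t => ?_
  rw [(LL_deriv t).deriv]
  exact div_pos (inv_pos.2 (hh_pos t)) (Ph_pos t)

lemma LL_top : Tendsto LL atTop atTop := by
  refine Real.tendsto_log_atTop.comp ?_
  have : Tendsto (fun t => 1 + t * (hh 0)⁻¹) atTop atTop :=
    tendsto_atTop_add_const_left _ _ (tendsto_id.atTop_mul_const (inv_pos.2 (hh_pos 0)))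
  refine tendsto_atTop_mono' _ ?_ this
  filter_upwards [eventually_ge_atTop 0] with t ht
  exact Ph_lower ht

lemma LL_neg (t : ℝ) : LL (-t) = - LL t := by
  rw [LL, LL, Ph_neg, Real.log_inv]

lemma LL_surj : Function.Surjective LL := by
  refine Continuous.surjective (continuous_iff_continuousAt.2 fun t => (LL_deriv t).continuousAt)
    LL_top ?_
  have := tendsto_neg_atTop_atBot.comp (LL_top.comp tendsto_neg_atBot_atTop)
  refine this.congr fun t => ?_
  simp [LL_neg]

/-- `LL` as an order isomorphism. -/
noncomputable def LI : ℝ ≃o ℝ := LL_strictMono.orderIsoOfSurjective LL LL_surj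

/-- `log λ(K)`. -/
noncomputable def GG (K : ℝ) : ℝ := LI.symm (Real.log K)

lemma LL_symm (y : ℝ) : LL (LI.symm y) = y := LI.apply_symm_apply y

lemma Ph_GG {K : ℝ} (hK : 0 < K) : Ph (GG K) = K := by
  have h := LL_symm (Real.log K)
  rw [LL] at h
  exact Real.log_injOn_pos (Ph_pos _) hK h

lemma GG_one : GG 1 = 0 := by
  rw [GG, Real.log_one]
  have : LL 0 = 0 := by rw [LL, Ph_zero, Real.log_one]
  have h2 : LI 0 = 0 := this
  exact LI.symm_apply_eq.2 h2.symm

lemma GG_deriv {K : ℝ} (hK : 0 < K) : HasDerivAt GG (hh (GG K)) K := by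
  have h1 : HasDerivAt LI.symm ((hh (GG K))⁻¹ / Ph (GG K))⁻¹ (Real.log K) := by
    refine HasDerivAt.of_local_left_inverse LI.symm.continuous.continuousAt
      (LL_deriv _) ?_ (Eventually.of_forall LL_symm)
    exact (div_pos (inv_pos.2 (hh_pos _)) (Ph_pos _)).ne'
  refine (h1.comp K (Real.hasDerivAt_log hK.ne')).congr_deriv ?_
  rw [Ph_GG hK]
  have := (hh_pos (GG K)).ne'
  field_simp

lemma GG_strictMono : StrictMonoOn GG (Ioi 0) := fun _ hx _ _ hxy =>
  LI.symm.strictMono (Real.log_lt_log hx hxy)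

lemma GG_top : Tendsto GG atTop atTop :=
  LI.symm.tendsto_atTop.comp Real.tendsto_log_atTop

/-- derivative of `GG`. -/
noncomputable def gp (K : ℝ) : ℝ := hh (GG K)

lemma gp_anti : StrictAntiOn gp (Ioi 0) := fun _ hx _ hy hxy =>
  hh_anti (GG_strictMono hx hy hxy)

lemma gp_deriv {K : ℝ} (hK : 0 < K) : HasDerivAt gp (hd (GG K) * hh (GG K)) K :=
  (hh_deriv (GG K)).comp K (GG_deriv hK)

lemma gp_cont : ContinuousOn gp (Ioi 0) := fun _ hx =>
  (gp_deriv hx).continuousAt.continuousWithinAt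

lemma gp_convex : ConvexOn ℝ (Ioi 0) gp := by
  refine MonotoneOn.convexOn_of_deriv (convex_Ioi 0) gp_cont ?_ ?_
  · rw [interior_Ioi]
    exact fun x hx => (gp_deriv hx).differentiableAt.differentiableWithinAt
  · rw [interior_Ioi]
    intro x hx y hy hxy
    rw [(gp_deriv hx).deriv, (gp_deriv hy).deriv]
    exact hhd_mono (GG_strictMono.monotoneOn hx hy hxy)

lemma gp_lim : Tendsto gp atTop (nhds Real.pi) := hh_lim.comp GG_top

lemma seg_pos {K s : ℝ} (hK : 1 < K) (hs : 0 ≤ s) : 0 < 1 + s * (K - 1) := by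
  have : 0 ≤ s * (K - 1) := mul_nonneg hs (by linarith)
  linarith

lemma seg_cont {K : ℝ} (hK : 1 < K) :
    ContinuousOn (fun s => gp (1 + s * (K - 1))) (Icc 0 1) :=
  gp_cont.comp (Continuous.continuousOn (by fun_prop)) fun _ hs => seg_pos hK hs.1

lemma seg_int {K : ℝ} (hK : 1 < K) :
    IntervalIntegrable (fun s => gp (1 + s * (K - 1))) MeasureTheory.volume 0 1 := by
  refine ContinuousOn.intervalIntegrable ?_
  rw [uIcc_of_le zero_le_one]
  exact seg_cont hK

lemma GG_avg {K : ℝ} (hK : 1 < K) :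
    GG K / (K - 1) = ∫ s in (0:ℝ)..1, gp (1 + s * (K - 1)) := by
  have h0 : K - 1 ≠ 0 := by linarith
  have := intervalIntegral.integral_eq_sub_of_hasDerivAt (a := 0) (b := 1)
    (f := fun s => GG (1 + s * (K - 1)) / (K - 1)) (f' := fun s => gp (1 + s * (K - 1))) ?_ (seg_int hK)
  · rw [this]
    simp [GG_one]
  · intro s hs
    rw [uIcc_of_le zero_le_one] at hs
    have e : HasDerivAt (fun s : ℝ => 1 + s * (K - 1)) (K - 1) s := by
      simpa using ((hasDerivAt_id s).mul_const (K - 1)).const_add 1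
    have h2 : HasDerivAt (fun s => GG (1 + s * (K - 1))) _ s :=
      HasDerivAt.comp (h₂ := GG) s (GG_deriv (seg_pos hK hs.1)) e
    refine (h2.div_const (K - 1)).congr_deriv ?_
    rw [gp]; field_simp

/-- the function of the theorem. -/
noncomputable def FF (K : ℝ) : ℝ := GG K / (K - 1)

lemma FF_anti : StrictAntiOn FF (Ioi 1) := by
  intro x hx y hy hxy
  rw [FF, FF, GG_avg hx, GG_avg hy]
  have hx' : 1 < x := hx
  have hy' : 1 < y := hy
  refine intervalIntegral.integral_lt_integral_of_continuousOn_of_le_of_exists_lt one_pos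
    (seg_cont hy) (seg_cont hx) ?_ ⟨1, by simp, ?_⟩
  · intro s hs
    refine gp_anti.antitoneOn (seg_pos hx hs.1.le) (seg_pos hy hs.1.le) ?_
    have := hs.1
    gcongr
  · refine gp_anti (seg_pos hx zero_le_one) (seg_pos hy zero_le_one) ?_
    linarith

lemma FF_convex : ConvexOn ℝ (Ioi 1) FF := by
  refine ⟨convex_Ioi 1, ?_⟩
  intro x hx y hy a b ha hb hab
  have hz : a • x + b • y ∈ Ioi (1:ℝ) := (convex_Ioi 1) hx hy ha hb hab
  rw [FF, FF, FF, GG_avg hx, GG_avg hy, GG_avg hz]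
  simp only [smul_eq_mul] at hz ⊢
  rw [
    ← intervalIntegral.integral_const_mul, ← intervalIntegral.integral_const_mul,
    ← intervalIntegral.integral_add ((seg_int hx).const_mul _) ((seg_int hy).const_mul _)]
  refine intervalIntegral.integral_mono_on zero_le_one (seg_int hz)
    (((seg_int hx).const_mul _).add ((seg_int hy).const_mul _)) ?_
  intro s hs
  have := gp_convex.2 (seg_pos hx hs.1) (seg_pos hy hs.1) ha hb hab
  simp only [smul_eq_mul] at this ⊢
  have e : 1 + s * (a * x + b * y - 1) = a * (1 + s * (x - 1)) + b * (1 + s * (y - 1)) := by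
    linear_combination (s - 1) * hab
  rw [e]
  exact this

lemma FF_one : Tendsto FF (nhdsWithin 1 (Ioi 1)) (nhds (hh 0)) := by
  have h := (GG_deriv one_pos)
  rw [GG_one] at h
  have h2 := (hasDerivAt_iff_tendsto_slope.1 h).mono_left
    (nhdsWithin_mono 1 (fun x hx => (ne_of_gt hx : x ≠ 1) : Ioi (1:ℝ) ⊆ {1}ᶜ))
  refine h2.congr fun x => ?_
  rw [slope_def_field, GG_one, FF, sub_zero]

lemma FF_top : Tendsto FF atTop (nhds Real.pi) := by
  have h : Tendsto (fun K : ℝ => ∫ s in (0:ℝ)..1, gp (1 + s * (K - 1))) atTop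
      (nhds (∫ s in (0:ℝ)..1, Real.pi)) := by
    refine intervalIntegral.tendsto_integral_filter_of_dominated_convergence (fun _ => gp 1) ?_ ?_
      intervalIntegrable_const ?_
    · filter_upwards [eventually_gt_atTop 1] with K hK
      exact (seg_int hK).def'.aestronglyMeasurable
    · filter_upwards [eventually_gt_atTop 1] with K hK
      refine Eventually.of_forall fun s hs => ?_
      rw [uIoc_of_le zero_le_one] at hs
      rw [Real.norm_of_nonneg (show 0 ≤ gp (1 + s * (K - 1)) from (hh_pos _).le)]
      refine gp_anti.antitoneOn (mem_Ioi.2 one_pos) (seg_pos hK hs.1.le) ?_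
      have : 0 ≤ s * (K - 1) := mul_nonneg hs.1.le (by linarith)
      linarith
    · refine Eventually.of_forall fun s hs => ?_
      rw [uIoc_of_le zero_le_one] at hs
      refine gp_lim.comp ?_
      refine tendsto_atTop_add_const_left _ _ (Tendsto.const_mul_atTop hs.1 ?_)
      exact tendsto_atTop_add_const_right _ _ tendsto_id
  simp only [intervalIntegral.integral_const, sub_zero, one_smul] at h
  refine h.congr' ?_
  filter_upwards [eventually_gt_atTop 1] with K hK
  rw [FF, GG_avg hK]

lemma FF_image : FF '' Ioi 1 = Ioo Real.pi (hh 0) := by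
  apply Subset.antisymm
  · rintro _ ⟨K, hK, rfl⟩
    have hK' : 1 < K := hK
    constructor
    · have h1 : FF (K + 1) < FF K := FF_anti hK (mem_Ioi.2 (by linarith)) (by linarith)
      refine lt_of_le_of_lt (le_of_tendsto FF_top ?_) h1
      filter_upwards [eventually_ge_atTop (K + 1)] with L hL
      exact FF_anti.antitoneOn (mem_Ioi.2 (by linarith)) (mem_Ioi.2 (by linarith)) hL
    · have h1 : FF K < FF ((1 + K) / 2) :=
        FF_anti (mem_Ioi.2 (by linarith)) hK (by linarith)
      refine lt_of_lt_of_le h1 (ge_of_tendsto FF_one ?_)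
      filter_upwards [Ioo_mem_nhdsGT (show (1:ℝ) < (1 + K) / 2 by linarith)] with L hL
      exact FF_anti.antitoneOn hL.1 (mem_Ioi.2 (by linarith)) hL.2.le
  · refine isPreconnected_Ioi.intermediate_value_Ioo (l₁ := atTop) (l₂ := nhdsWithin 1 (Ioi 1))
      ?_ ?_ ?_ FF_top FF_one
    · exact le_principal_iff.2 (Ioi_mem_atTop 1)
    · exact le_principal_iff.2 self_mem_nhdsWithin
    · intro x hx
      have hx' : 1 < x := hx
      refine ContinuousAt.continuousWithinAt ?_
      exact (GG_deriv (by linarith)).continuousAt.div (by fun_prop) (by linarith)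

lemma ellK_eq (r : ℝ) : ellK r = kk (r ^ 2) := by
  simp [ellK, kk, JJ]

theorem stmt_4 (lam : ℝ → ℝ)
    (hlam : ∀ K : ℝ, 0 < K → ∀ r ∈ Set.Ioo (0:ℝ) 1,
      mu r = Real.pi / (2 * K) → lam K = r ^ 2 / (1 - r ^ 2)) (a : ℝ)
    (ha : a = 4 / Real.pi * ellK (1 / Real.sqrt 2) ^ 2) (f : ℝ → ℝ)
    (hf : f = fun K : ℝ => Real.log (lam K) / (K - 1)) :
    StrictAntiOn f (Set.Ioi 1) ∧ ConvexOn ℝ (Set.Ioi 1) f ∧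
    Filter.Tendsto f (nhdsWithin 1 (Set.Ioi 1)) (nhds a) ∧
    Filter.Tendsto f Filter.atTop (nhds Real.pi) ∧
    f '' Set.Ioi 1 = Set.Ioo Real.pi a := by
  have ha' : a = hh 0 := by
    rw [ha, hh, ellK_eq, neg_zero, Real.sigmoid_zero]
    congr 3
    rw [div_pow, Real.sq_sqrt (by norm_num)]
    norm_num
  have hl : ∀ K : ℝ, 0 < K → Real.log (lam K) = GG K := by
    intro K hK
    set t := GG K with ht
    have s0 := Real.sigmoid_pos t
    have s1 := Real.sigmoid_lt_one t
    have hsq : Real.sqrt (Real.sigmoid t) ^ 2 = Real.sigmoid t := Real.sq_sqrt s0.le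
    have hsn := Real.sigmoid_neg t
    have h := hlam K hK (Real.sqrt (Real.sigmoid t))
      ⟨Real.sqrt_pos.2 s0, by rw [Real.sqrt_lt' one_pos]; simpa using s1⟩ ?_
    · rw [h, hsq, ← hsn, ← Real.sigmoid_mul_rexp_neg, Real.exp_neg]
      have : Real.sigmoid t / (Real.sigmoid t * (Real.exp t)⁻¹) = Real.exp t := by
        field_simp
      rw [this, Real.log_exp]
    · rw [mu, ellK_eq, ellK_eq, hsq, ← hsn, Real.sq_sqrt (Real.sigmoid_nonneg _)]
      have h1 := Ph_GG hK
      rw [← ht, Ph, div_eq_iff (ks_pos _).ne'] at h1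
      rw [h1]
      have := (ks_pos (-t)).ne'
      field_simp
  have hE : EqOn FF f (Ioi 1) := by
    intro K hK
    have hK' : 1 < K := hK
    rw [hf, FF]
    simp only
    rw [hl K (by linarith)]
  rw [ha']
  refine ⟨FF_anti.congr hE, FF_convex.congr hE, FF_one.congr' ?_, FF_top.congr' ?_, ?_⟩
  · filter_upwards [self_mem_nhdsWithin] with K hK using hE hK
  · filter_upwards [eventually_gt_atTop 1] with K hK using hE hK
  · rw [← FF_image]
    exact (hE.image_eq).symm
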